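/- The following two statements are equivalent. (1) For every separable complex Hilbert space H, every sequence of scalars (m_j)_{j=1}^∞, and all sequences (x_j)_{j=1}^∞, (f_j)_{j=1}^∞ in H such that the series Σ_{j=1}^∞ ε_j m_j ⟨x, f_j⟩ x_j converges for every x ∈ H and every sequence of scalars (ε_j) with |ε_j| = 1, there exist sequences of scalars (c_j)_{j=1}^∞ and (d_j)_{j=1}^∞ with c_j · conj(d_j) = m_j for all j such that both (c_j x_j)_{j=1}^∞ and (d_j f_j)_{j=1}^∞ are Bessel. (2) There exists a universal constant κ > 0 such that: for every C > 0, every finite-dimensional complex Hilbert space H, every n ∈ ℕ, and all scalars (m_j)_{j=1}^n and vectors (x_j)_{j=1}^n, (f_j)_{j=1}^n in H satisfying ‖Σ_{j=1}^n ε_j m_j ⟨x, f_j⟩ x_j‖ ≤ C‖x‖ for all x ∈ H and all |ε_j| = 1, there exist scalars (c_j)_{j=1}^n and (d_j)_{j=1}^n with c_j · conj(d_j) = m_j for all 1 ≤ j ≤ n such that both (c_j x_j)_{j=1}^n and (d_j f_j)_{j=1}^n are Bessel with Bessel bound Cκ. -/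

import Mathlib

/-!
From the quantitative to the infinite statement: uniform boundedness gives one constant `C` for all
signed partial sums. The finite statement on the span of the first `n` vectors then yields factors
whose Bessel bounds do not depend on `n`, and these converge along an ultrafilter on `ℕ`. An index
where `x j` or `f j` vanishes gives no bound on one of the factors; there the factors are chosen
directly, at the cost of a term `(1 / 2) ^ j` in the Bessel bounds.

From the infinite to the quantitative statement: if no `κ` works, then for every `k` there is a
multiplier with unconditional bound `1` (after scaling) which does not factor with Bessel bound
`k + 1`. Their Hilbert direct sum is an unconditionally convergent multiplier, since a finite sum of
its terms splits orthogonally into blocks, each of which is an average of two signed sums. A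
factorization on the direct sum restricts to every block with the same Bessel bounds, which
contradicts the choice of the blocks.

The Mathlib inner product is conjugate-linear in its first argument, so the maps
`v ↦ ∑ (m j * ⟪v, f j⟫) • x j` are conjugate-linear.
-/

open scoped ComplexInnerProductSpace

/-- Statement (1): every unconditionally convergent frame multiplier on a separable complex
Hilbert space admits a factorization of its symbol making both weighted sequences Bessel. -/
def InfiniteMultiplierConjecture : Prop :=
  ∀ (H : Type) [NormedAddCommGroup H] [InnerProductSpace ℂ H] [CompleteSpace H]
    [TopologicalSpace.SeparableSpace H]
    (m : ℕ → ℂ) (x f : ℕ → H),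
    (∀ (v : H) (ε : ℕ → ℂ), (∀ j, ‖ε j‖ = 1) →
      ∃ y : H, Filter.Tendsto
        (fun n => ∑ j ∈ Finset.range n, (ε j * m j * ⟪v, f j⟫) • x j)
        Filter.atTop (nhds y)) →
    ∃ c d : ℕ → ℂ, (∀ j, c j * (starRingEnd ℂ) (d j) = m j) ∧
      (∃ B : ℝ, ∀ (v : H) (n : ℕ),
        ∑ j ∈ Finset.range n, ‖⟪v, c j • x j⟫‖ ^ 2 ≤ B * ‖v‖ ^ 2) ∧
      (∃ B : ℝ, ∀ (v : H) (n : ℕ),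
        ∑ j ∈ Finset.range n, ‖⟪v, d j • f j⟫‖ ^ 2 ≤ B * ‖v‖ ^ 2)

/-- Statement (2): there is a universal constant `κ > 0` such that every finite-dimensional
multiplier with unconditional bound `C` admits a factorization of its symbol making both
weighted sequences Bessel with Bessel bound `Cκ`. -/
def QuantitativeMultiplierConjecture : Prop :=
  ∃ κ : ℝ, 0 < κ ∧
    ∀ (C : ℝ), 0 < C →
    ∀ (H : Type) [NormedAddCommGroup H] [InnerProductSpace ℂ H] [FiniteDimensional ℂ H]
      (n : ℕ) (m : Fin n → ℂ) (x f : Fin n → H),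
      (∀ (v : H) (ε : Fin n → ℂ), (∀ j, ‖ε j‖ = 1) →
        ‖∑ j, (ε j * m j * ⟪v, f j⟫) • x j‖ ≤ C * ‖v‖) →
      ∃ c d : Fin n → ℂ, (∀ j, c j * (starRingEnd ℂ) (d j) = m j) ∧
        (∀ v : H, ∑ j, ‖⟪v, c j • x j⟫‖ ^ 2 ≤ C * κ * ‖v‖ ^ 2) ∧
        (∀ v : H, ∑ j, ‖⟪v, d j • f j⟫‖ ^ 2 ≤ C * κ * ‖v‖ ^ 2)

/-! ### Quantitative implies infinite -/

/-- Uniform boundedness for unconditionally convergent multipliers. Choosing `ε j` to be the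
conjugate phase of `m j * ⟪v, f j⟫ * ⟪w, x j⟫` shows that the scalar series
`∑ ‖m j * ⟪v, f j⟫ * ⟪w, x j⟫‖` converges, so the signed partial sums are weakly bounded at each `v`.
Two applications of Banach–Steinhaus (in `w`, then in `v`) give a uniform bound. -/
lemma exists_uniform_bound {H : Type} [NormedAddCommGroup H] [InnerProductSpace ℂ H]
    [CompleteSpace H] (m : ℕ → ℂ) (x f : ℕ → H)
    (h : ∀ (v : H) (ε : ℕ → ℂ), (∀ j, ‖ε j‖ = 1) →
      ∃ y : H, Filter.Tendsto
        (fun n => ∑ j ∈ Finset.range n, (ε j * m j * ⟪v, f j⟫) • x j)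
        Filter.atTop (nhds y)) :
    ∃ C : ℝ, ∀ (n : ℕ) (ε : ℕ → ℂ), (∀ j, ‖ε j‖ = 1) → ∀ v : H,
      ‖∑ j ∈ Finset.range n, (ε j * m j * ⟪v, f j⟫) • x j‖ ≤ C * ‖v‖ := by
  have weak : ∀ v w : H, ∃ M : ℝ, ∀ n : ℕ,
      ∑ j ∈ Finset.range n, ‖m j * ⟪v, f j⟫ * ⟪w, x j⟫‖ ≤ M := by
    intro v w
    have phase : ∀ z : ℂ, ∃ u : ℂ, ‖u‖ = 1 ∧ u * z = (‖z‖ : ℂ) := by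
      intro z
      by_cases hz : z = 0
      · exact ⟨1, by simp, by simp [hz]⟩
      · have hz' : (‖z‖ : ℂ) ≠ 0 := by simpa using hz
        refine ⟨(‖z‖ : ℂ) / z, ?_, by field_simp⟩
        rw [norm_div, Complex.norm_real, norm_norm, div_self (by simpa using hz)]
    choose ε hε1 hε2 using fun j => phase (m j * ⟪v, f j⟫ * ⟪w, x j⟫)
    obtain ⟨y, hy⟩ := h v ε hε1
    have h1 := (((continuous_const (y := w)).inner (𝕜 := ℂ) continuous_id).tendsto y).comp hy
    obtain ⟨M, hM⟩ := (Metric.isBounded_range_of_tendsto _ h1).exists_norm_le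
    refine ⟨M, fun n => ?_⟩
    have h2 := hM _ ⟨n, rfl⟩
    simp only [Function.comp, id, inner_sum, inner_smul_right] at h2
    rw [Finset.sum_congr rfl (fun j _ => show ε j * m j * ⟪v, f j⟫ * ⟪w, x j⟫ =
      ((‖m j * ⟪v, f j⟫ * ⟪w, x j⟫‖ : ℝ) : ℂ) by rw [← hε2 j]; ring),
      ← Complex.ofReal_sum, Complex.norm_real] at h2
    exact (le_abs_self _).trans h2
  let I := ℕ × {ε : ℕ → ℂ // ∀ j, ‖ε j‖ = 1}
  let T : I → H →L⋆[ℂ] H := fun i =>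
    { toFun := fun v => ∑ j ∈ Finset.range i.1, (i.2.1 j * m j * ⟪v, f j⟫) • x j
      map_add' := fun v w => by
        rw [← Finset.sum_add_distrib]
        refine Finset.sum_congr rfl fun j _ => ?_
        rw [inner_add_left, mul_add, add_smul]
      map_smul' := fun c v => by
        rw [Finset.smul_sum]
        refine Finset.sum_congr rfl fun j _ => ?_
        rw [inner_smul_left, smul_smul]
        congr 1
        ring
      cont := by
        show Continuous fun v => ∑ j ∈ Finset.range i.1, (i.2.1 j * m j * ⟪v, f j⟫) • x j
        fun_prop }
  have strong : ∀ v : H, ∃ M : ℝ, ∀ i : I, ‖T i v‖ ≤ M := by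
    intro v
    have := banach_steinhaus (g := fun i : I => innerSL ℂ (T i v)) (fun w => ?_)
    · simpa using this
    · obtain ⟨M, hM⟩ := weak v w
      refine ⟨M, fun i => ?_⟩
      rw [innerSL_apply_apply, norm_inner_symm]
      show ‖⟪w, ∑ j ∈ Finset.range i.1, (i.2.1 j * m j * ⟪v, f j⟫) • x j⟫‖ ≤ M
      rw [inner_sum]
      refine (norm_sum_le _ _).trans (le_trans (le_of_eq ?_) (hM i.1))
      refine Finset.sum_congr rfl fun j _ => ?_
      rw [inner_smul_right]
      simp only [norm_mul, i.2.2 j, one_mul]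
  obtain ⟨C, hC⟩ := banach_steinhaus strong
  exact ⟨C, fun n ε hε v => (T (n, ⟨ε, hε⟩)).le_of_opNorm_le (hC _) v⟩

/-- The finite-dimensional statement applies to finitely many vectors of an arbitrary Hilbert space:
restrict to the span of the vectors, and recover the Bessel bounds by orthogonal projection. -/
lemma finite_factorization {κ : ℝ} (hκ : 0 < κ)
    (hQ : ∀ (C : ℝ), 0 < C →
      ∀ (H : Type) [NormedAddCommGroup H] [InnerProductSpace ℂ H] [FiniteDimensional ℂ H]
        (n : ℕ) (m : Fin n → ℂ) (x f : Fin n → H),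
        (∀ (v : H) (ε : Fin n → ℂ), (∀ j, ‖ε j‖ = 1) →
          ‖∑ j, (ε j * m j * ⟪v, f j⟫) • x j‖ ≤ C * ‖v‖) →
        ∃ c d : Fin n → ℂ, (∀ j, c j * (starRingEnd ℂ) (d j) = m j) ∧
          (∀ v : H, ∑ j, ‖⟪v, c j • x j⟫‖ ^ 2 ≤ C * κ * ‖v‖ ^ 2) ∧
          (∀ v : H, ∑ j, ‖⟪v, d j • f j⟫‖ ^ 2 ≤ C * κ * ‖v‖ ^ 2))
    {C : ℝ} (hC : 0 < C) {H : Type} [NormedAddCommGroup H] [InnerProductSpace ℂ H]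
    (m : ℕ → ℂ) (x f : ℕ → H)
    (hb : ∀ (n : ℕ) (ε : ℕ → ℂ), (∀ j, ‖ε j‖ = 1) → ∀ v : H,
      ‖∑ j ∈ Finset.range n, (ε j * m j * ⟪v, f j⟫) • x j‖ ≤ C * ‖v‖) (n : ℕ) :
    ∃ c d : ℕ → ℂ, (∀ j < n, c j * (starRingEnd ℂ) (d j) = m j) ∧
      (∀ v : H, ∑ j ∈ Finset.range n, ‖⟪v, c j • x j⟫‖ ^ 2 ≤ C * κ * ‖v‖ ^ 2) ∧
      (∀ v : H, ∑ j ∈ Finset.range n, ‖⟪v, d j • f j⟫‖ ^ 2 ≤ C * κ * ‖v‖ ^ 2) := by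
  let K : Submodule ℂ H := Submodule.span ℂ
    (x '' Set.Iio n ∪ f '' Set.Iio n)
  have : FiniteDimensional ℂ K := FiniteDimensional.span_of_finite ℂ
    (((Set.finite_Iio n).image x).union ((Set.finite_Iio n).image f))
  have hx : ∀ j : Fin n, x j ∈ K := fun j => Submodule.subset_span (Or.inl ⟨j, j.2, rfl⟩)
  have hf : ∀ j : Fin n, f j ∈ K := fun j => Submodule.subset_span (Or.inr ⟨j, j.2, rfl⟩)
  obtain ⟨c, d, hcd, h1, h2⟩ := hQ C hC K n (fun j => m j) (fun j => ⟨x j, hx j⟩)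
    (fun j => ⟨f j, hf j⟩) (fun v ε hε => by
      have := hb n (fun j => if h : j < n then ε ⟨j, h⟩ else 1)
        (fun j => by split_ifs <;> simp [hε]) v
      rw [Finset.sum_range] at this
      simpa using this)
  have proj : ∀ (a : Fin n → ℂ) (y : Fin n → H) (hy : ∀ j, y j ∈ K),
      (∀ v : K, ∑ j, ‖⟪v, a j • (⟨y j, hy j⟩ : K)⟫‖ ^ 2 ≤ C * κ * ‖v‖ ^ 2) →
      ∀ v : H, ∑ j, ‖⟪v, a j • y j⟫‖ ^ 2 ≤ C * κ * ‖v‖ ^ 2 := by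
    intro a y hy h v
    refine le_trans (le_of_eq ?_) ((h (K.orthogonalProjectionOnto v)).trans ?_)
    · refine Finset.sum_congr rfl fun j _ => ?_
      rw [Submodule.inner_orthogonalProjectionOnto_eq_of_mem_right]
      rfl
    · have := K.norm_orthogonalProjectionOnto_apply_le v
      gcongr
  refine ⟨fun j => if h : j < n then c ⟨j, h⟩ else 0, fun j => if h : j < n then d ⟨j, h⟩ else 0,
    fun j hj => by simpa [hj] using hcd ⟨j, hj⟩, fun v => ?_, fun v => ?_⟩
  · rw [Finset.sum_range]
    simpa using proj c (fun j => x j) hx h1 v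
  · rw [Finset.sum_range]
    simpa using proj d (fun j => f j) hf h2 v

/-- A nonzero scalar can make any given vector as short as desired. -/
lemma exists_small_scalar {H : Type} [NormedAddCommGroup H] [InnerProductSpace ℂ H] (y : H)
    {δ : ℝ} (hδ : 0 < δ) : ∃ p : ℂ, p ≠ 0 ∧ ‖p • y‖ ^ 2 ≤ δ := by
  have h0 : 0 < 1 + ‖y‖ := by positivity
  have hs : 0 < Real.sqrt δ / (1 + ‖y‖) := by positivity
  refine ⟨((Real.sqrt δ / (1 + ‖y‖) : ℝ) : ℂ), by exact_mod_cast hs.ne', ?_⟩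
  rw [norm_smul, Complex.norm_real, Real.norm_of_nonneg hs.le, mul_pow, div_pow, Real.sq_sqrt hδ.le,
    div_mul_eq_mul_div, div_le_iff₀ (by positivity)]
  gcongr
  linarith

/-- If `‖⟪v, a n • y⟫‖ ^ 2` is eventually bounded uniformly in `n` and in unit vectors `v`, and
`y ≠ 0`, then the scalars `a n` are eventually bounded and so converge along `U`. -/
lemma exists_ultrafilter_limit {H : Type} [NormedAddCommGroup H] [InnerProductSpace ℂ H]
    (U : Ultrafilter ℕ) (a : ℕ → ℂ) {y : H} (hy : y ≠ 0) {B : ℝ}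
    (h : ∀ᶠ n in (U : Filter ℕ), ∀ v : H, ‖⟪v, a n • y⟫‖ ^ 2 ≤ B * ‖v‖ ^ 2) :
    ∃ p : ℂ, Filter.Tendsto a U (nhds p) := by
  have hy0 : 0 < ‖y‖ := norm_pos_iff.2 hy
  have hb : ∀ᶠ n in (U : Filter ℕ), a n ∈ Metric.closedBall (0 : ℂ) (Real.sqrt (B / ‖y‖ ^ 2)) := by
    filter_upwards [h] with n hn
    rw [mem_closedBall_zero_iff]
    apply Real.le_sqrt_of_sq_le
    -- Testing at `v = y` gives `‖a n‖ ^ 2 * ‖y‖ ^ 4 ≤ B * ‖y‖ ^ 2`.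
    have := hn y
    rw [inner_smul_right, inner_self_eq_norm_sq_to_K, norm_mul, norm_pow] at this
    simp only [Complex.coe_algebraMap, Complex.norm_real, norm_norm] at this
    rw [le_div_iff₀ (by positivity)]
    have h2 : 0 < ‖y‖ ^ 2 := by positivity
    nlinarith
  obtain ⟨p, -, hp⟩ := (isCompact_closedBall (0 : ℂ) _).ultrafilter_le_nhds' (U.map a) hb
  exact ⟨p, hp⟩

/-- The slack `δ * ‖v‖ ^ 2` turns convergence of the scalars into an inequality holding already at
finite stages, and matches the form of the error allowed at indices with a zero vector. -/
lemma eventually_le_of_tendsto {H : Type} [NormedAddCommGroup H] [InnerProductSpace ℂ H]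
    {U : Filter ℕ} {a : ℕ → ℂ} {p : ℂ} (h : Filter.Tendsto a U (nhds p)) (y v : H)
    {δ : ℝ} (hδ : 0 < δ) :
    ∀ᶠ n in U, ‖⟪v, p • y⟫‖ ^ 2 ≤ ‖⟪v, a n • y⟫‖ ^ 2 + δ * ‖v‖ ^ 2 := by
  by_cases hv : v = 0
  · simp [hv]
  have hv0 : 0 < ‖v‖ := norm_pos_iff.2 hv
  have hc : Continuous fun q : ℂ => ‖⟪v, q • y⟫‖ ^ 2 + δ * ‖v‖ ^ 2 := by fun_prop
  have ht := (hc.tendsto p).comp h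
  exact (ht.eventually (lt_mem_nhds (show ‖⟪v, p • y⟫‖ ^ 2 < _ from
    lt_add_of_pos_right _ (by positivity)))).mono fun n hn => hn.le

lemma le_of_norm_sq_le {H : Type} [NormedAddCommGroup H] [InnerProductSpace ℂ H]
    {z v : H} {δ t : ℝ} (hz : ‖z‖ ^ 2 ≤ δ) (ht : 0 ≤ t) :
    ‖⟪v, z⟫‖ ^ 2 ≤ t + δ * ‖v‖ ^ 2 := by
  have h1 : ‖⟪v, z⟫‖ ^ 2 ≤ (‖v‖ * ‖z‖) ^ 2 := by
    gcongr
    exact norm_inner_le_norm v z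
  nlinarith [sq_nonneg ‖v‖]

/-- The limiting factor pair at a single index. If both vectors are nonzero, the finite-stage
factors are bounded and converge along `U`. If one vector vanishes, its factor is irrelevant and the
other factor can be taken as small as required. -/
lemma exists_limit_pair {H : Type} [NormedAddCommGroup H] [InnerProductSpace ℂ H]
    (U : Ultrafilter ℕ) (a b : ℕ → ℂ) (x f : H) (μ : ℂ) {B δ : ℝ} (hδ : 0 < δ)
    (hab : ∀ᶠ n in (U : Filter ℕ), a n * (starRingEnd ℂ) (b n) = μ)
    (ha : ∀ᶠ n in (U : Filter ℕ), ∀ v : H, ‖⟪v, a n • x⟫‖ ^ 2 ≤ B * ‖v‖ ^ 2)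
    (hb : ∀ᶠ n in (U : Filter ℕ), ∀ v : H, ‖⟪v, b n • f⟫‖ ^ 2 ≤ B * ‖v‖ ^ 2) :
    ∃ p q : ℂ, p * (starRingEnd ℂ) q = μ ∧
      (∀ v : H, ∀ᶠ n in (U : Filter ℕ), ‖⟪v, p • x⟫‖ ^ 2 ≤ ‖⟪v, a n • x⟫‖ ^ 2 + δ * ‖v‖ ^ 2) ∧
      (∀ v : H, ∀ᶠ n in (U : Filter ℕ), ‖⟪v, q • f⟫‖ ^ 2 ≤ ‖⟪v, b n • f⟫‖ ^ 2 + δ * ‖v‖ ^ 2) := by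
  by_cases hx : x = 0
  · obtain ⟨q, hq0, hq⟩ := exists_small_scalar f hδ
    have : (starRingEnd ℂ) q ≠ 0 := by simpa using hq0
    refine ⟨μ / (starRingEnd ℂ) q, q, by field_simp, fun v => ?_, fun v => ?_⟩
    · exact .of_forall fun n => le_of_norm_sq_le (by simpa [hx] using hδ.le) (by positivity)
    · exact .of_forall fun n => le_of_norm_sq_le hq (by positivity)
  by_cases hf : f = 0
  · obtain ⟨p, hp0, hp⟩ := exists_small_scalar x hδ
    refine ⟨p, (starRingEnd ℂ) (μ / p), by simp; field_simp, fun v => ?_, fun v => ?_⟩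
    · exact .of_forall fun n => le_of_norm_sq_le hp (by positivity)
    · exact .of_forall fun n => le_of_norm_sq_le (by simpa [hf] using hδ.le) (by positivity)
  obtain ⟨p, hp⟩ := exists_ultrafilter_limit U a hx ha
  obtain ⟨q, hq⟩ := exists_ultrafilter_limit U b hf hb
  refine ⟨p, q, ?_, fun v => eventually_le_of_tendsto hp x v hδ,
    fun v => eventually_le_of_tendsto hq f v hδ⟩
  exact tendsto_nhds_unique_of_eventuallyEq
    (hp.mul ((Complex.continuous_conj.tendsto q).comp hq)) tendsto_const_nhds hab

lemma infinite_of_quantitative (hQ : QuantitativeMultiplierConjecture) :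
    InfiniteMultiplierConjecture := by
  obtain ⟨κ, hκ, hQ⟩ := hQ
  intro H _ _ _ _ m x f h
  obtain ⟨C₀, hC₀⟩ := exists_uniform_bound m x f h
  let C := max C₀ 1
  have hC : 0 < C := lt_max_of_lt_right one_pos
  have hb : ∀ (n : ℕ) (ε : ℕ → ℂ), (∀ j, ‖ε j‖ = 1) → ∀ v : H,
      ‖∑ j ∈ Finset.range n, (ε j * m j * ⟪v, f j⟫) • x j‖ ≤ C * ‖v‖ := fun n ε hε v =>
    (hC₀ n ε hε v).trans (mul_le_mul_of_nonneg_right (le_max_left _ _) (norm_nonneg _))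
  choose c d hcd h1 h2 using finite_factorization hκ hQ hC m x f hb
  let U : Ultrafilter ℕ := Filter.hyperfilter ℕ
  have hU : ∀ N, ∀ᶠ n in (U : Filter ℕ), N ≤ n := fun N =>
    Nat.hyperfilter_le_atTop (Filter.eventually_ge_atTop N)
  have term : ∀ (a : ℕ → ℕ → ℂ) (y : ℕ → H),
      (∀ n, ∀ v : H, ∑ j ∈ Finset.range n, ‖⟪v, a n j • y j⟫‖ ^ 2 ≤ C * κ * ‖v‖ ^ 2) → ∀ j,
      ∀ᶠ n in (U : Filter ℕ), ∀ v : H, ‖⟪v, a n j • y j⟫‖ ^ 2 ≤ C * κ * ‖v‖ ^ 2 := by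
    intro a y hay j
    filter_upwards [hU (j + 1)] with n hn v
    exact (Finset.single_le_sum (f := fun j => ‖⟪v, a n j • y j⟫‖ ^ 2) (fun _ _ => by positivity)
      (Finset.mem_range.2 hn)).trans (hay n v)
  choose p q hpq hp hq using fun j => exists_limit_pair U (fun n => c n j) (fun n => d n j) (x j)
    (f j) (m j) (δ := (1 / 2) ^ j) (by positivity)
    ((hU (j + 1)).mono fun n hn => hcd n j hn) (term c x h1 j) (term d f h2 j)
  have bessel : ∀ (a : ℕ → ℕ → ℂ) (r : ℕ → ℂ) (y : ℕ → H),
      (∀ n, ∀ v : H, ∑ j ∈ Finset.range n, ‖⟪v, a n j • y j⟫‖ ^ 2 ≤ C * κ * ‖v‖ ^ 2) →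
      (∀ j, ∀ v : H, ∀ᶠ n in (U : Filter ℕ),
        ‖⟪v, r j • y j⟫‖ ^ 2 ≤ ‖⟪v, a n j • y j⟫‖ ^ 2 + (1 / 2) ^ j * ‖v‖ ^ 2) →
      ∀ (v : H) (N : ℕ), ∑ j ∈ Finset.range N, ‖⟪v, r j • y j⟫‖ ^ 2 ≤ (C * κ + 2) * ‖v‖ ^ 2 := by
    intro a r y hay hr v N
    obtain ⟨n, hn, hNn⟩ := (((Filter.eventually_all_finset (Finset.range N)).2
      fun j _ => hr j v).and (hU N)).exists
    calc ∑ j ∈ Finset.range N, ‖⟪v, r j • y j⟫‖ ^ 2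
        ≤ ∑ j ∈ Finset.range N, (‖⟪v, a n j • y j⟫‖ ^ 2 + (1 / 2) ^ j * ‖v‖ ^ 2) :=
          Finset.sum_le_sum hn
      _ = ∑ j ∈ Finset.range N, ‖⟪v, a n j • y j⟫‖ ^ 2
          + (∑ j ∈ Finset.range N, (1 / 2 : ℝ) ^ j) * ‖v‖ ^ 2 := by
          rw [Finset.sum_add_distrib, Finset.sum_mul]
      _ ≤ C * κ * ‖v‖ ^ 2 + 2 * ‖v‖ ^ 2 := by
          gcongr
          · exact (Finset.sum_le_sum_of_subset_of_nonneg (Finset.range_mono hNn)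
              fun _ _ _ => by positivity).trans (hay n v)
          · exact sum_geometric_two_le N
      _ = _ := by ring
  exact ⟨p, q, hpq, ⟨_, bessel c p x h1 hp⟩, ⟨_, bessel d q f h2 hq⟩⟩

/-! ### Normalized multipliers -/

/-- A finite-dimensional multiplier with unconditional bound `1`, bundled so that sequences of
multipliers on varying spaces can be formed. -/
structure NormalizedMultiplier where
  H : Type
  [grp : NormedAddCommGroup H]
  [ips : InnerProductSpace ℂ H]
  [fin : FiniteDimensional ℂ H]
  n : ℕ
  m : Fin n → ℂ
  x : Fin n → H
  f : Fin n → H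
  bound : ∀ (v : H) (ε : Fin n → ℂ), (∀ j, ‖ε j‖ = 1) →
    ‖∑ j, (ε j * m j * ⟪v, f j⟫) • x j‖ ≤ ‖v‖

namespace NormalizedMultiplier

attribute [instance] NormalizedMultiplier.grp NormalizedMultiplier.ips NormalizedMultiplier.fin

/-- The symbol of the multiplier factors so that both weighted families have Bessel bound `B`. -/
def Factors (S : NormalizedMultiplier) (B : ℝ) : Prop :=
  ∃ c d : Fin S.n → ℂ, (∀ j, c j * (starRingEnd ℂ) (d j) = S.m j) ∧
    (∀ v : S.H, ∑ j, ‖⟪v, c j • S.x j⟫‖ ^ 2 ≤ B * ‖v‖ ^ 2) ∧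
    (∀ v : S.H, ∑ j, ‖⟪v, d j • S.f j⟫‖ ^ 2 ≤ B * ‖v‖ ^ 2)

/-- A partial sum is the average of two full signed sums, hence obeys the same bound. -/
lemma bound_subset (S : NormalizedMultiplier) (s : Finset (Fin S.n)) (v : S.H) (ε : Fin S.n → ℂ)
    (hε : ∀ j, ‖ε j‖ = 1) : ‖∑ j ∈ s, (ε j * S.m j * ⟪v, S.f j⟫) • S.x j‖ ≤ ‖v‖ := by
  have h1 := S.bound v ε hε
  have h2 := S.bound v (fun j => if j ∈ s then ε j else -ε j)
    (fun j => by split_ifs <;> simp [hε])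
  have e : (2 : ℂ) • ∑ j ∈ s, (ε j * S.m j * ⟪v, S.f j⟫) • S.x j =
      ∑ j, (ε j * S.m j * ⟪v, S.f j⟫) • S.x j +
      ∑ j, ((if j ∈ s then ε j else -ε j) * S.m j * ⟪v, S.f j⟫) • S.x j := by
    rw [← Finset.sum_add_distrib, Finset.smul_sum]
    refine Finset.sum_subset_zero_on_sdiff (Finset.subset_univ s) (fun j hj => ?_) fun j hj => ?_
    · have hj' : j ∉ s := by simpa using hj
      simp [hj', neg_mul, neg_smul]
    · simp [hj, two_smul]
  have h3 := norm_add_le_of_le h1 h2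
  rw [← e, norm_smul, Complex.norm_ofNat] at h3
  linarith

/-- By homogeneity, a Bessel bound for normalized multipliers gives the general statement. Only
multipliers with at least one term need to be considered. -/
lemma quantitative_of_factors {κ : ℝ} (hκ : 0 < κ)
    (h : ∀ S : NormalizedMultiplier, 0 < S.n → S.Factors κ) :
    QuantitativeMultiplierConjecture := by
  refine ⟨κ, hκ, fun C hC H _ _ _ n m x f hb => ?_⟩
  rcases Nat.eq_zero_or_pos n with rfl | hn
  · refine ⟨0, 0, fun j => j.elim0, fun v => ?_, fun v => ?_⟩ <;>
    · simp only [Finset.univ_eq_empty, Finset.sum_empty]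
      positivity
  have hC' : (C : ℂ) ≠ 0 := by exact_mod_cast hC.ne'
  obtain ⟨c, d, hcd, h1, h2⟩ := h
    { H := H, n := n, m := fun j => (C : ℂ)⁻¹ * m j, x := x, f := f,
      bound := fun v ε hε => by
        have e : ∑ j, (ε j * ((C : ℂ)⁻¹ * m j) * ⟪v, f j⟫) • x j =
            (C : ℂ)⁻¹ • ∑ j, (ε j * m j * ⟪v, f j⟫) • x j := by
          rw [Finset.smul_sum]
          refine Finset.sum_congr rfl fun j _ => ?_
          rw [smul_smul]
          congr 1
          ring
        rw [e, norm_smul, norm_inv, Complex.norm_real, Real.norm_of_nonneg hC.le,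
          inv_mul_le_iff₀ hC]
        exact hb v ε hε } hn
  have hs : ((Real.sqrt C : ℝ) : ℂ) * (Real.sqrt C : ℝ) = C := by
    rw [← Complex.ofReal_mul, Real.mul_self_sqrt hC.le]
  have scale : ∀ (a : Fin n → ℂ) (y : Fin n → H),
      (∀ v : H, ∑ j, ‖⟪v, a j • y j⟫‖ ^ 2 ≤ κ * ‖v‖ ^ 2) →
      ∀ v : H, ∑ j, ‖⟪v, ((Real.sqrt C : ℝ) * a j : ℂ) • y j⟫‖ ^ 2 ≤ C * κ * ‖v‖ ^ 2 := by
    intro a y hay v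
    have e : ∑ j, ‖⟪v, ((Real.sqrt C : ℝ) * a j : ℂ) • y j⟫‖ ^ 2 =
        C * ∑ j, ‖⟪v, a j • y j⟫‖ ^ 2 := by
      rw [Finset.mul_sum]
      refine Finset.sum_congr rfl fun j _ => ?_
      rw [mul_smul, inner_smul_right, norm_mul, mul_pow, Complex.norm_real, Real.norm_eq_abs,
        sq_abs, Real.sq_sqrt hC.le]
    rw [e, mul_assoc]
    exact mul_le_mul_of_nonneg_left (hay v) hC.le
  refine ⟨fun j => (Real.sqrt C : ℝ) * c j, fun j => (Real.sqrt C : ℝ) * d j, fun j => ?_,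
    scale c x h1, scale d f h2⟩
  have := hcd j
  simp only at this
  rw [map_mul, Complex.conj_ofReal, mul_mul_mul_comm, hs, this, mul_inv_cancel_left₀ hC']

/-! ### The Hilbert direct sum of a sequence of multipliers -/

/-- The Hilbert direct sum of the underlying spaces. -/
abbrev Sum (b : ℕ → NormalizedMultiplier) : Type := lp (fun k => (b k).H) 2

instance (b : ℕ → NormalizedMultiplier) : CompleteSpace (Sum b) := by
  have : ∀ k, CompleteSpace (b k).H := fun k => FiniteDimensional.complete ℂ _
  infer_instance

instance (b : ℕ → NormalizedMultiplier) : TopologicalSpace.SeparableSpace (Sum b) := by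
  have : ∀ k, TopologicalSpace.SeparableSpace (b k).H := fun k =>
    have := FiniteDimensional.proper ℂ (b k).H
    inferInstance
  have h1 : TopologicalSpace.IsSeparable
      (⋃ k, Set.range (lp.single (E := fun k => (b k).H) 2 k)) :=
    .iUnion fun k => TopologicalSpace.isSeparable_range (lp.isometry_single k).continuous
  have h2 := (h1.span (R := ℂ)).closure
  rw [← TopologicalSpace.isSeparable_univ_iff]
  refine h2.mono fun v _ => ?_
  refine mem_closure_of_tendsto (lp.hasSum_single (by simp) v) (.of_forall fun s => ?_)
  exact Submodule.sum_mem _ fun k _ => Submodule.subset_span (Set.mem_iUnion.2 ⟨k, _, rfl⟩)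

/-- Indices of the terms of all the multipliers of a sequence. -/
abbrev Index (b : ℕ → NormalizedMultiplier) : Type := Σ k, Fin (b k).n

/-- The combined multiplier on the direct sum is unconditionally summable: a finite sum over indices
in blocks `k ∈ K` has squared norm at most `∑ k ∈ K, ‖v k‖ ^ 2`, a part of a convergent series. -/
lemma summable_sum (b : ℕ → NormalizedMultiplier) (v : Sum b) (ε : Index b → ℂ)
    (hε : ∀ i, ‖ε i‖ = 1) :
    Summable fun i : Index b => (ε i * (b i.1).m i.2 * ⟪v, lp.single 2 i.1 ((b i.1).f i.2)⟫) •
      (lp.single 2 i.1 ((b i.1).x i.2) : Sum b) := by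
  classical
  have hv : Summable fun k => ‖v k‖ ^ 2 := by
    have := (lp.memℓp v).summable (by norm_num)
    simpa using this
  rw [summable_iff_vanishing_norm]
  intro δ hδ
  obtain ⟨K, hK⟩ := summable_iff_vanishing_norm.1 hv (δ ^ 2) (by positivity)
  refine ⟨K.sigma fun _ => Finset.univ, fun t ht => ?_⟩
  let L := t.image Sigma.fst
  let s : ∀ k, Finset (Fin (b k).n) := fun k => Finset.univ.filter fun j => (⟨k, j⟩ : Index b) ∈ t
  have hts : t = L.sigma s := by
    ext ⟨k, j⟩
    simp only [Finset.mem_sigma, L, s, Finset.mem_image, Finset.mem_filter, Finset.mem_univ,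
      true_and]
    exact ⟨fun h => ⟨⟨_, h, rfl⟩, h⟩, fun h => h.2⟩
  have hL : Disjoint L K := by
    rw [Finset.disjoint_left]
    intro k hk hkK
    obtain ⟨i, hi, rfl⟩ := Finset.mem_image.1 hk
    exact Finset.disjoint_left.1 ht hi (by simp [hkK])
  have e : ∑ i ∈ t, (ε i * (b i.1).m i.2 * ⟪v, lp.single 2 i.1 ((b i.1).f i.2)⟫) •
      (lp.single 2 i.1 ((b i.1).x i.2) : Sum b) =
      ∑ k ∈ L, lp.single 2 k
        (∑ j ∈ s k, (ε ⟨k, j⟩ * (b k).m j * ⟪v k, (b k).f j⟫) • (b k).x j) := by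
    rw [hts, Finset.sum_sigma]
    refine Finset.sum_congr rfl fun k _ => ?_
    refine Eq.trans ?_ (map_sum (lp.lsingle (𝕜 := ℂ) (E := fun k => (b k).H) 2 k) _ _).symm
    refine Finset.sum_congr rfl fun j _ => ?_
    rw [lp.inner_single_right, map_smul]
    rfl
  have hn := lp.norm_sum_single (p := 2) (E := fun k => (b k).H) (by norm_num)
    (fun k => ∑ j ∈ s k, (ε ⟨k, j⟩ * (b k).m j * ⟪v k, (b k).f j⟫) • (b k).x j) L
  rw [← e] at hn
  simp only [ENNReal.toReal_ofNat, Real.rpow_ofNat] at hn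
  have h1 : ∑ k ∈ L, ‖v k‖ ^ 2 < δ ^ 2 := (le_abs_self _).trans_lt (hK L hL)
  refine lt_of_pow_lt_pow_left₀ 2 hδ.le (lt_of_le_of_lt ?_ h1)
  rw [hn]
  refine Finset.sum_le_sum fun k _ => ?_
  have := (b k).bound_subset (s k) (v k) (fun j => ε ⟨k, j⟩) (fun j => hε _)
  gcongr

/-- Enumerating the terms of the direct sum over `ℕ` and testing a factorization there on vectors
supported in one block bounds all the multipliers of the sequence at once. -/
lemma exists_common_bound (hI : InfiniteMultiplierConjecture) (b : ℕ → NormalizedMultiplier)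
    (hn : ∀ k, 0 < (b k).n) : ∃ B, ∀ k, (b k).Factors B := by
  classical
  have : Infinite (Index b) :=
    Infinite.of_surjective Sigma.fst fun k => ⟨⟨k, ⟨0, hn k⟩⟩, rfl⟩
  obtain ⟨hden⟩ := nonempty_denumerable (Index b)
  let e : Index b ≃ ℕ := Denumerable.eqv (Index b)
  let X : Index b → Sum b := fun i => lp.single 2 i.1 ((b i.1).x i.2)
  let F : Index b → Sum b := fun i => lp.single 2 i.1 ((b i.1).f i.2)
  obtain ⟨c, d, hcd, ⟨B₁, h1⟩, ⟨B₂, h2⟩⟩ := hI (Sum b) (fun j => (b (e.symm j).1).m (e.symm j).2)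
    (fun j => X (e.symm j)) (fun j => F (e.symm j)) (fun v ε hε => by
      have := (e.symm.summable_iff.2 (summable_sum b v (fun i => ε (e i)) fun i => hε _)).hasSum
      refine ⟨_, this.tendsto_sum_nat.congr fun n => ?_⟩
      simp [X, F])
  have restrict : ∀ (a : ℕ → ℂ) (y : ∀ i : Index b, (b i.1).H) (B B' : ℝ), B ≤ B' →
      (∀ (v : Sum b) (n : ℕ), ∑ j ∈ Finset.range n,
        ‖⟪v, a j • (lp.single 2 (e.symm j).1 (y (e.symm j)) : Sum b)⟫‖ ^ 2 ≤ B * ‖v‖ ^ 2) →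
      ∀ (k : ℕ) (v : (b k).H), ∑ j, ‖⟪v, a (e ⟨k, j⟩) • y ⟨k, j⟩⟫‖ ^ 2 ≤ B' * ‖v‖ ^ 2 := by
    intro a y B B' hB hay k v
    let g : Fin (b k).n ↪ ℕ := ⟨fun j => e ⟨k, j⟩, fun i j h => by simpa using h⟩
    obtain ⟨N, hN⟩ := (Finset.univ.map g).exists_nat_subset_range
    have h := hay (lp.single 2 k v) N
    rw [lp.norm_single (by norm_num)] at h
    refine le_trans ?_ (h.trans (mul_le_mul_of_nonneg_right hB (by positivity)))
    refine le_trans (le_of_eq ?_) (Finset.sum_le_sum_of_subset_of_nonneg hN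
      fun _ _ _ => by positivity)
    rw [Finset.sum_map]
    refine Finset.sum_congr rfl fun j _ => ?_
    have hg : e.symm (g j) = ⟨k, j⟩ := e.symm_apply_apply _
    rw [hg, inner_smul_right, inner_smul_right, lp.inner_single_left, lp.single_apply_self]
    rfl
  refine ⟨max B₁ B₂, fun k => ⟨fun j => c (e ⟨k, j⟩), fun j => d (e ⟨k, j⟩), fun j => ?_,
    restrict c (fun i => (b i.1).x i.2) B₁ _ (le_max_left _ _) h1 k,
    restrict d (fun i => (b i.1).f i.2) B₂ _ (le_max_right _ _) h2 k⟩⟩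
  have := hcd (e ⟨k, j⟩)
  rwa [e.symm_apply_apply] at this

end NormalizedMultiplier

lemma quantitative_of_infinite (hI : InfiniteMultiplierConjecture) :
    QuantitativeMultiplierConjecture := by
  by_contra hQ
  have bad : ∀ k : ℕ, ∃ S : NormalizedMultiplier, 0 < S.n ∧ ¬ S.Factors (k + 1) := by
    intro k
    by_contra! hk
    exact hQ (NormalizedMultiplier.quantitative_of_factors (by positivity) hk)
  choose b hn hb using bad
  obtain ⟨B, hB⟩ := NormalizedMultiplier.exists_common_bound hI b hn
  obtain ⟨k, hk⟩ := exists_nat_ge B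
  obtain ⟨c, d, hcd, h1, h2⟩ := hB k
  have hBk : B ≤ k + 1 := by linarith
  exact hb k ⟨c, d, hcd,
    fun v => (h1 v).trans (mul_le_mul_of_nonneg_right hBk (by positivity)),
    fun v => (h2 v).trans (mul_le_mul_of_nonneg_right hBk (by positivity))⟩

/-! ### The equivalence -/

/-- The infinite-dimensional conjecture on unconditionally convergent multipliers is
equivalent to its quantitative finite-dimensional counterpart. -/
theorem multiplier_conjecture_equivalence :
    InfiniteMultiplierConjecture ↔ QuantitativeMultiplierConjecture := by
  exact ⟨quantitative_of_infinite, infinite_of_quantitative⟩
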